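/- Let d and t be positive integers and let h_1, …, h_t ∈ ℝ^d be such that the additive subgroup h_1ℤ + h_2ℤ + ⋯ + h_tℤ is dense in ℝ^d. Let f : ℝ^d → ℂ be continuous and suppose there exist natural numbers m_1, …, m_t such that for every k = 1, …, t the function Δ_{h_k}^{m_k} f is a continuous exponential polynomial. Then f is a continuous exponential polynomial. -/

import Mathlib

/-- Forward difference operator: `(fd h f) x = f (x + h) - f x`. -/
def fd {α : Type*} [Add α] (h : α) (f : α → ℂ) : α → ℂ := fun x => f (x + h) - f x

/-- `f : ℝ^d → ℂ` is a continuous exponential polynomial: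
`f x = ∑ j, p j (x) * exp (⟨λ_j, x⟩)` with `p j` polynomials in `d` variables
with complex coefficients and `λ_j ∈ ℂ^d`. -/
def IsExpPoly (d : ℕ) (f : (Fin d → ℝ) → ℂ) : Prop :=
  ∃ (n : ℕ) (p : Fin n → MvPolynomial (Fin d) ℂ) (lam : Fin n → Fin d → ℂ),
    ∀ x, f x = ∑ j, (MvPolynomial.eval (fun i => (x i : ℂ)) (p j)) *
      Complex.exp (∑ i, lam j i * (x i : ℂ))

/-!
The exponential polynomials on `ℝ^d` are exactly the representative functions: the continuous
functions whose translates span a finite-dimensional space.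

Let `U` be the sum of the spans of the translates of the functions `Δ_{h_k}^{m_k} f`; it is
finite-dimensional and translation-invariant. Modulo `U`, `f` is killed by `(T_k - 1)^{m_k}`, where
`T_k` is translation by `h_k`. As the `T_k` are finitely many and commute, `ℂ[T_1, …, T_t] f + U`
is finite-dimensional. A finite-dimensional space invariant under an injective operator is
invariant under its inverse, so this space contains the translates of `f` by a dense subgroup, and
hence, being closed for pointwise convergence, all translates of `f`.

A representative function on `ℝ` is differentiable with derivative in the span `V` of its
translates, so splitting `V` into generalized eigenspaces of `d/dx` gives a sum of polynomials times
exponentials. The addition formula `f (x + y) = ∑ j, u j x * v j y` with `u j`, `v j` in the span of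
the translates then reduces `ℝ^d` to its coordinate axes.
-/

section CommutingOperators

open Polynomial

theorem finite_quotient_of_adjoin_eq_top {R A : Type*} [CommRing R] [CommRing A] [Algebra R A]
    {s : Set A} (hs : s.Finite) (hadj : Algebra.adjoin R s = ⊤) {I : Ideal A}
    (hint : ∀ a ∈ s, IsIntegral R (Ideal.Quotient.mk I a)) : Module.Finite R (A ⧸ I) := by
  have hfg := fg_adjoin_of_finite (hs.image (Ideal.Quotient.mkₐ R I)) (by simpa using hint)
  rw [← AlgHom.map_adjoin, hadj, Algebra.map_top,
    (AlgHom.range_eq_top _).2 (Ideal.Quotient.mkₐ_surjective R I)] at hfg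
  exact ⟨hfg⟩

theorem fg_span_singleton_sup_of_integral {R A M : Type*} [CommRing R] [CommRing A] [Algebra R A]
    [AddCommGroup M] [Module R M] [Module A M] [IsScalarTower R A M]
    {s : Set A} (hs : s.Finite) (hadj : Algebra.adjoin R s = ⊤)
    {U : Submodule A M} (hU : (U.restrictScalars R).FG) {x : M}
    (hx : ∀ a ∈ s, ∃ p : R[X], p.Monic ∧ aeval a p • x ∈ U) :
    ((A ∙ x ⊔ U).restrictScalars R).FG := by
  -- The image of `A ∙ x` in `M ⧸ U` is `A ⧸ φ.ker`, which is generated by integral elements.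
  let φ : A →ₗ[A] M ⧸ U := LinearMap.toSpanSingleton A (M ⧸ U) (U.mkQ x)
  have hint : ∀ a ∈ s, IsIntegral R (Ideal.Quotient.mk φ.ker a) := fun a ha => by
    obtain ⟨p, hp, hpx⟩ := hx a ha
    refine ⟨p, hp, ?_⟩
    rw [← aeval_def, ← Ideal.Quotient.mkₐ_eq_mk R, aeval_algHom_apply, Ideal.Quotient.mkₐ_eq_mk,
      Ideal.Quotient.eq_zero_iff_mem, LinearMap.mem_ker, LinearMap.toSpanSingleton_apply,
      ← map_smul]
    exact (Submodule.Quotient.mk_eq_zero U).2 hpx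
  have : Module.Finite R (A ⧸ φ.ker) := finite_quotient_of_adjoin_eq_top hs hadj hint
  have hrange : (φ.range.restrictScalars R).FG :=
    Module.Finite.iff_fg.1 (Module.Finite.equiv (φ.quotKerEquivRange.restrictScalars R))
  have hmap : (A ∙ x ⊔ U).map U.mkQ = φ.range := by
    rw [Submodule.map_sup, Submodule.mkQ_map_self, sup_bot_eq, Submodule.map_span,
      Set.image_singleton, LinearMap.range_toSpanSingleton]
  have hker : (A ∙ x ⊔ U) ⊓ U.mkQ.ker = U := by simp
  refine Submodule.fg_of_fg_map_of_fg_inf_ker (U.mkQ.restrictScalars R) ?_ ?_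
  · rwa [← hmap] at hrange
  · rwa [← hker] at hU

theorem mem_invtSubmodule_of_mem_adjoin {R M : Type*} [CommSemiring R] [AddCommMonoid M]
    [Module R M] {S : Set (Module.End R M)} {U : Submodule R M}
    (hU : ∀ T ∈ S, U ∈ T.invtSubmodule) {T : Module.End R M} (hT : T ∈ Algebra.adjoin R S) :
    U ∈ T.invtSubmodule := by
  induction hT using Algebra.adjoin_induction with
  | mem _ h => exact hU _ h
  | algebraMap r => exact fun u hu => U.smul_mem r hu
  | add _ _ _ _ h₁ h₂ => exact fun u hu => U.add_mem (h₁ hu) (h₂ hu)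
  | mul _ _ _ _ h₁ h₂ => exact fun u hu => h₁ (h₂ hu)

open scoped IsMulCommutative in
theorem exists_fg_mem_invtSubmodule_of_commute {R M ι : Type*} [CommRing R] [AddCommGroup M]
    [Module R M] [Finite ι] {T : ι → Module.End R M} (hT : ∀ i j, Commute (T i) (T j))
    {U : Submodule R M} (hU : U.FG) (hUT : ∀ i, U ∈ (T i).invtSubmodule) {x : M}
    (hx : ∀ i, ∃ p : R[X], p.Monic ∧ aeval (T i) p x ∈ U) :
    ∃ V : Submodule R M, V.FG ∧ x ∈ V ∧ ∀ i, V ∈ (T i).invtSubmodule := by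
  let A := Algebra.adjoin R (Set.range T)
  have : IsMulCommutative A := Algebra.isMulCommutative_adjoin R <| by
    rintro _ ⟨i, rfl⟩ _ ⟨j, rfl⟩
    exact hT i j
  let a : ι → A := fun i => ⟨T i, Algebra.subset_adjoin ⟨i, rfl⟩⟩
  have hadj : Algebra.adjoin R (Set.range a) = ⊤ := by
    convert Algebra.adjoin_adjoin_coe_preimage (R := R) (s := Set.range T) using 2
    ext b
    simp [a, Subtype.ext_iff]
  let U' : Submodule A M :=
    { U with smul_mem' := fun b _ hu =>
        mem_invtSubmodule_of_mem_adjoin (Set.forall_mem_range.2 hUT) b.2 hu }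
  have hxU' : ∀ b ∈ Set.range a, ∃ p : R[X], p.Monic ∧ aeval b p • x ∈ U' := by
    rintro _ ⟨i, rfl⟩
    obtain ⟨p, hp, hpx⟩ := hx i
    have hcoe : ((aeval (a i) p : A) : Module.End R M) = aeval (T i) p :=
      (aeval_algHom_apply A.val (a i) p).symm
    exact ⟨p, hp, by rwa [← hcoe] at hpx⟩
  refine ⟨(A ∙ x ⊔ U').restrictScalars R,
    fg_span_singleton_sup_of_integral (Set.finite_range a) hadj (U := U') hU hxU',
    Submodule.mem_sup_left (Submodule.mem_span_singleton_self x),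
    fun i v hv => (A ∙ x ⊔ U').smul_mem (a i) hv⟩

end CommutingOperators


section Translation

variable {G : Type*}

/-- Translation of functions on an additive monoid, `f ↦ f (· + h)`, as a multiplicative family of
linear operators. This is not `translate`, whose sign is opposite and which needs a group. -/
def translationOp [AddMonoid G] : AddChar G (Module.End ℂ (G → ℂ)) where
  toFun h := LinearMap.funLeft ℂ ℂ (· + h)
  map_zero_eq_one' := by ext; simp
  map_add_eq_mul' x y := by ext; simp [add_assoc]

@[simp]
theorem translationOp_apply [AddMonoid G] (h : G) (f : G → ℂ) (x : G) :
    translationOp h f x = f (x + h) := rfl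

theorem translationOp_mul [AddMonoid G] (h : G) (f g : G → ℂ) :
    translationOp h (f * g) = translationOp h f * translationOp h g := rfl

theorem commute_translationOp [AddCommMonoid G] (x y : G) :
    Commute (translationOp x) (translationOp y) := by
  rw [Commute, SemiconjBy, ← AddChar.map_add_eq_mul, ← AddChar.map_add_eq_mul, add_comm]

theorem fd_iterate_eq [AddMonoid G] (h : G) (n : ℕ) (f : G → ℂ) :
    (fd h)^[n] f = ((translationOp h - 1) ^ n) f := by
  rw [Module.End.pow_apply]
  rfl

theorem mem_invtSubmodule_translationOp_neg [AddGroup G] {V : Submodule ℂ (G → ℂ)} (hV : V.FG)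
    {h : G} (hVh : V ∈ (translationOp h).invtSubmodule) :
    V ∈ (translationOp (-h)).invtSubmodule := by
  have : FiniteDimensional ℂ V := .of_fg hV
  let e : (G → ℂ) ≃ₗ[ℂ] (G → ℂ) := LinearEquiv.funCongrLeft ℂ ℂ (Equiv.addRight h)
  have hmap : V.map (e : (G → ℂ) →ₗ[ℂ] (G → ℂ)) = V :=
    Submodule.eq_of_le_of_finrank_eq ((Module.End.mem_invtSubmodule_iff_map_le _).1 hVh)
      (LinearEquiv.finrank_map_eq e V)
  exact Module.End.mem_invtSubmodule_symm_iff_le_map.2 hmap.ge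

theorem mem_invtSubmodule_translationOp_of_mem_closure [AddGroup G] {V : Submodule ℂ (G → ℂ)}
    (hV : V.FG) {S : Set G} (hS : ∀ h ∈ S, V ∈ (translationOp h).invtSubmodule) {y : G}
    (hy : y ∈ AddSubgroup.closure S) : V ∈ (translationOp y).invtSubmodule := by
  induction hy using AddSubgroup.closure_induction with
  | mem h hh => exact hS h hh
  | zero => exact fun v hv => by simpa using hv
  | add x y _ _ hx hy =>
    rw [AddChar.map_add_eq_mul]
    exact fun v hv => hx (hy hv)
  | neg x _ hx => exact mem_invtSubmodule_translationOp_neg hV hx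

/-- The linear span of the translates of `f`, the smallest translation-invariant subspace
containing `f`; no closure is taken. -/
def translateSpan [AddMonoid G] (f : G → ℂ) : Submodule ℂ (G → ℂ) :=
  Submodule.span ℂ (Set.range fun h => translationOp h f)

section AddMonoid

variable [AddMonoid G] {f g : G → ℂ}

theorem translationOp_mem_translateSpan (h : G) (f : G → ℂ) :
    translationOp h f ∈ translateSpan f :=
  Submodule.subset_span ⟨h, rfl⟩

theorem self_mem_translateSpan (f : G → ℂ) : f ∈ translateSpan f := by
  simpa using translationOp_mem_translateSpan 0 f

theorem translateSpan_mem_invtSubmodule (h : G) (f : G → ℂ) :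
    translateSpan f ∈ (translationOp h).invtSubmodule := by
  refine Submodule.span_le.2 ?_
  rintro _ ⟨y, rfl⟩
  have hmem := translationOp_mem_translateSpan (h + y) f
  rwa [AddChar.map_add_eq_mul] at hmem

theorem translateSpan_le {V : Submodule ℂ (G → ℂ)} (hV : ∀ h, translationOp h f ∈ V) :
    translateSpan f ≤ V :=
  Submodule.span_le.2 (Set.range_subset_iff.2 hV)

theorem continuous_of_mem_translateSpan [TopologicalSpace G] [ContinuousAdd G] (hf : Continuous f)
    (hg : g ∈ translateSpan f) : Continuous g := by
  induction hg using Submodule.span_induction with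
  | mem _ h => obtain ⟨y, rfl⟩ := h; exact hf.comp (continuous_add_const y)
  | zero => exact continuous_const
  | add _ _ _ _ h₁ h₂ => exact h₁.add h₂
  | smul c _ _ h => exact h.const_smul c

end AddMonoid

end Translation

section Representative

theorem span_range_eval_eq_top {X K : Type*} [Field K] (V : Submodule K (X → K))
    [FiniteDimensional K V] :
    Submodule.span K (Set.range fun x => (LinearMap.proj x ∘ₗ V.subtype : Module.Dual K V)) = ⊤ :=
  Submodule.span_eq_top_of_ne_zero fun v hv => by
    obtain ⟨x, hx⟩ := Function.ne_iff.1 (Subtype.coe_ne_coe.2 hv)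
    exact ⟨_, ⟨x, rfl⟩, hx⟩

variable {G : Type*} [TopologicalSpace G]

/-- A representative function on a topological monoid: a continuous function whose translates span
a finite-dimensional space. -/
structure IsRepresentative [AddMonoid G] (f : G → ℂ) : Prop where
  continuous : Continuous f
  fg_translateSpan : (translateSpan f).FG

section AddMonoid

variable [AddMonoid G] {f g : G → ℂ}

theorem IsRepresentative.of_forall_translationOp_mem {V : Submodule ℂ (G → ℂ)} (hV : V.FG)
    (hf : Continuous f) (hfV : ∀ h, translationOp h f ∈ V) : IsRepresentative f :=
  have : IsNoetherian ℂ V := isNoetherian_of_fg_of_noetherian V hV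
  ⟨hf, Submodule.FG.of_le hV (translateSpan_le hfV)⟩

theorem IsRepresentative.of_mem_translateSpan [ContinuousAdd G] (hf : IsRepresentative f)
    (hg : g ∈ translateSpan f) : IsRepresentative g :=
  of_forall_translationOp_mem hf.fg_translateSpan (continuous_of_mem_translateSpan hf.continuous hg)
    fun h => translateSpan_mem_invtSubmodule h f hg

theorem IsRepresentative.add (hf : IsRepresentative f) (hg : IsRepresentative g) :
    IsRepresentative (f + g) :=
  of_forall_translationOp_mem (hf.fg_translateSpan.sup hg.fg_translateSpan)
    (hf.continuous.add hg.continuous) fun h => by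
      rw [map_add]
      exact Submodule.add_mem_sup (translationOp_mem_translateSpan h f)
        (translationOp_mem_translateSpan h g)

theorem IsRepresentative.mul (hf : IsRepresentative f) (hg : IsRepresentative g) :
    IsRepresentative (f * g) :=
  of_forall_translationOp_mem (hf.fg_translateSpan.mul hg.fg_translateSpan)
    (hf.continuous.mul hg.continuous) fun h => by
      rw [translationOp_mul]
      exact Submodule.mul_mem_mul (translationOp_mem_translateSpan h f)
        (translationOp_mem_translateSpan h g)

theorem isRepresentative_const (c : ℂ) : IsRepresentative fun _ : G => c :=
  .of_forall_translationOp_mem (Submodule.fg_span_singleton fun _ => c) continuous_const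
    fun _ => Submodule.mem_span_singleton_self _

theorem IsRepresentative.sum {ι : Type*} {s : Finset ι} {F : ι → G → ℂ}
    (hF : ∀ i ∈ s, IsRepresentative (F i)) : IsRepresentative (∑ i ∈ s, F i) :=
  Finset.sum_induction F IsRepresentative (fun _ _ => .add) (isRepresentative_const 0) hF

theorem isRepresentative_addMonoidHom (φ : G →+ ℂ) (hφ : Continuous φ) :
    IsRepresentative φ :=
  .of_forall_translationOp_mem (V := Submodule.span ℂ {1, ⇑φ}) (Submodule.fg_span (by simp)) hφ
    fun h => Submodule.mem_span_pair.2 ⟨φ h, 1, by ext; simp [add_comm]⟩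

theorem isRepresentative_addChar (χ : AddChar G ℂ) (hχ : Continuous χ) :
    IsRepresentative χ :=
  .of_forall_translationOp_mem (Submodule.fg_span_singleton ⇑χ) hχ fun h =>
    Submodule.mem_span_singleton.2 ⟨χ h, by ext; simp [AddChar.map_add_eq_mul, mul_comm]⟩

theorem IsRepresentative.comp_addMonoidHom {H : Type*} [AddMonoid H] [TopologicalSpace H]
    (hf : IsRepresentative f) (φ : H →+ G) (hφ : Continuous φ) : IsRepresentative (f ∘ φ) :=
  of_forall_translationOp_mem (hf.fg_translateSpan.map (LinearMap.funLeft ℂ ℂ φ))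
    (hf.continuous.comp hφ) fun h =>
      ⟨translationOp (φ h) f, translationOp_mem_translateSpan _ f, by ext; simp⟩

end AddMonoid

theorem IsRepresentative.exists_add_eq_sum [AddCommMonoid G] {f : G → ℂ} (hf : IsRepresentative f) :
    ∃ (n : ℕ) (u v : Fin n → G → ℂ), (∀ j, u j ∈ translateSpan f) ∧ (∀ j, v j ∈ translateSpan f) ∧
      ∀ x y, f (x + y) = ∑ j, u j x * v j y := by
  have : FiniteDimensional ℂ (translateSpan f) := .of_fg hf.fg_translateSpan
  let b := Module.finBasis ℂ (translateSpan f)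
  -- `f (x + y)` is the value at `x` of the translate `τ y`, to be expanded in the basis `b`; the
  -- coordinates of `τ y` are functions of `y` in the same span because evaluations span the dual.
  let τ : G → translateSpan f := fun y => ⟨_, translationOp_mem_translateSpan y f⟩
  have hτ : ∀ φ ∈ (⊤ : Submodule ℂ (Module.Dual ℂ (translateSpan f))),
      (fun y => φ (τ y)) ∈ translateSpan f := by
    rw [← span_range_eval_eq_top]
    intro φ hφ
    induction hφ using Submodule.span_induction with
    | mem _ h =>
      obtain ⟨x, rfl⟩ := h
      convert translationOp_mem_translateSpan x f using 2 with y
      exact congrArg f (add_comm x y)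
    | zero => exact zero_mem _
    | add _ _ _ _ h₁ h₂ => exact add_mem h₁ h₂
    | smul c _ _ h => exact Submodule.smul_mem _ c h
  refine ⟨_, fun j => b j, fun j y => b.repr (τ y) j, fun j => (b j).2,
    fun j => hτ (b.coord j) trivial, fun x y => ?_⟩
  calc f (x + y) = ((∑ j, b.repr (τ y) j • b j : translateSpan f) : G → ℂ) x := by
        rw [b.sum_repr]; rfl
    _ = ∑ j, (b j : G → ℂ) x * b.repr (τ y) j := by
        simp [-Module.Basis.sum_repr, mul_comm]

open Polynomial in
theorem IsRepresentative.of_fd_iterate [AddCommGroup G] [ContinuousAdd G] {ι : Type*} [Finite ι]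
    {h : ι → G} (hdense : Dense (AddSubgroup.closure (Set.range h) : Set G)) {f : G → ℂ}
    (hf : Continuous f) {m : ι → ℕ}
    (hfd : ∀ k, IsRepresentative ((fd (h k))^[m k] f)) : IsRepresentative f := by
  let U : Submodule ℂ (G → ℂ) := ⨆ k, translateSpan ((fd (h k))^[m k] f)
  have hU : U.FG := Submodule.fg_iSup _ fun k => (hfd k).fg_translateSpan
  have hUinv : ∀ i, U ∈ (translationOp (h i)).invtSubmodule := fun i =>
    iSup_le fun k => (translateSpan_mem_invtSubmodule (h i) _).trans
      (Submodule.comap_mono (le_iSup _ k))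
  have hfU : ∀ i, ∃ p : ℂ[X], p.Monic ∧ aeval (translationOp (h i)) p f ∈ U := fun i => by
    refine ⟨(X - C 1) ^ m i, (monic_X_sub_C 1).pow _, Submodule.mem_iSup_of_mem i ?_⟩
    have hp : aeval (translationOp (h i)) ((X - C 1 : ℂ[X]) ^ m i) f = (fd (h i))^[m i] f := by
      simp [fd_iterate_eq]
    rw [hp]
    exact self_mem_translateSpan _
  obtain ⟨V, hV, hfV, hVinv⟩ := exists_fg_mem_invtSubmodule_of_commute
    (fun i j => commute_translationOp (h i) (h j)) hU hUinv hfU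
  have : FiniteDimensional ℂ V := .of_fg hV
  have hclosed : IsClosed {y | translationOp y f ∈ V} :=
    V.closed_of_finiteDimensional.preimage
      (continuous_pi fun x => hf.comp (continuous_const_add x))
  have hsub : (AddSubgroup.closure (Set.range h) : Set G) ⊆ {y | translationOp y f ∈ V} :=
    fun y hy => mem_invtSubmodule_translationOp_of_mem_closure hV (Set.forall_mem_range.2 hVinv)
      hy hfV
  exact of_forall_translationOp_mem hV hf fun y => closure_minimal hsub hclosed (hdense y)

end Representative

section RealLine

open Polynomial

theorem fd_mem_translateSpan_of_hasDerivAt {f F : ℝ → ℂ} (hf : IsRepresentative f)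
    (hF : ∀ x, HasDerivAt F (f x) x) (ε : ℝ) : fd ε F ∈ translateSpan f := by
  obtain ⟨n, u, v, hu, hv, hadd⟩ := hf.exists_add_eq_sum
  have hvc : ∀ j, Continuous (v j) := fun j => continuous_of_mem_translateSpan hf.continuous (hv j)
  have hfd : fd ε F = ∑ j, (∫ s in (0 : ℝ)..ε, v j s) • u j := by
    ext x
    calc fd ε F x = ∫ s in x..x + ε, f s :=
          (intervalIntegral.integral_eq_sub_of_hasDerivAt (fun s _ => hF s)
            (hf.continuous.intervalIntegrable _ _)).symm
      _ = ∫ s in (0 : ℝ)..ε, f (x + s) := by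
          rw [intervalIntegral.integral_comp_add_left, add_zero]
      _ = ∑ j, ∫ s in (0 : ℝ)..ε, u j x * v j s := by
          simp only [hadd]
          exact intervalIntegral.integral_finsetSum fun j _ =>
            ((hvc j).const_mul (u j x)).intervalIntegrable _ _
      _ = (∑ j, (∫ s in (0 : ℝ)..ε, v j s) • u j) x := by
          simp [mul_comm]
  rw [hfd]
  exact Submodule.sum_mem _ fun j _ => Submodule.smul_mem _ _ (hu j)

-- The space `W` is finite-dimensional, hence closed for pointwise convergence, and `f` is the
-- pointwise limit of the difference quotients of its primitive `F`, which lie in `W`.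
theorem IsRepresentative.exists_hasDerivAt {f : ℝ → ℂ} (hf : IsRepresentative f) :
    ∃ f' ∈ translateSpan f, ∀ x, HasDerivAt f (f' x) x := by
  let W : Submodule ℂ (ℝ → ℂ) :=
    { carrier := {v | v ∈ translateSpan f ∧ ∃ v' ∈ translateSpan f, ∀ x, HasDerivAt v (v' x) x}
      zero_mem' := ⟨zero_mem _, 0, zero_mem _, fun x => hasDerivAt_const x 0⟩
      add_mem' := fun ⟨hv, v', hv', hd⟩ ⟨hw, w', hw', he⟩ =>
        ⟨add_mem hv hw, v' + w', add_mem hv' hw', fun x => (hd x).add (he x)⟩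
      smul_mem' := fun c v ⟨hv, v', hv', hd⟩ =>
        ⟨Submodule.smul_mem _ c hv, c • v', Submodule.smul_mem _ c hv',
          fun x => (hd x).const_smul c⟩ }
  have : FiniteDimensional ℂ (translateSpan f) := .of_fg hf.fg_translateSpan
  have : FiniteDimensional ℂ W := Submodule.finiteDimensional_of_le fun v hv => hv.1
  let F : ℝ → ℂ := fun x => ∫ s in (0 : ℝ)..x, f s
  have hF : ∀ x, HasDerivAt F (f x) x := fun x =>
    (hf.continuous.integral_hasStrictDerivAt 0 x).hasDerivAt
  have hmem : ∀ ε, fd ε F ∈ W := fun ε =>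
    ⟨fd_mem_translateSpan_of_hasDerivAt hf hF ε, translationOp ε f - f,
      sub_mem (translationOp_mem_translateSpan ε f) (self_mem_translateSpan f),
      fun x => ((hF (x + ε)).comp_add_const x ε).sub (hF x)⟩
  have hlim : Filter.Tendsto (fun ε : ℝ => ε⁻¹ • fd ε F) (nhdsWithin 0 {0}ᶜ) (nhds f) :=
    tendsto_pi_nhds.2 fun x => (hF x).tendsto_slope_zero
  exact (W.closed_of_finiteDimensional.mem_of_tendsto hlim
    (.of_forall fun ε => W.smul_of_tower_mem ε⁻¹ (hmem ε))).2

theorem derivative_surjective {K : Type*} [Field K] [CharZero K] :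
    Function.Surjective (derivative : K[X] → K[X]) := fun p => by
  induction p using Polynomial.induction_on' with
  | add p q hp hq =>
    obtain ⟨a, rfl⟩ := hp
    obtain ⟨b, rfl⟩ := hq
    exact ⟨a + b, derivative_add⟩
  | monomial n a =>
    have hn : (n : K) + 1 ≠ 0 := Nat.cast_add_one_ne_zero n
    exact ⟨monomial (n + 1) (a / (n + 1)), by simp [hn]⟩

theorem exists_eq_eval_of_hasDerivAt_eval {u : ℝ → ℂ} {p : ℂ[X]}
    (hu : ∀ s : ℝ, HasDerivAt u (p.eval (s : ℂ)) s) :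
    ∃ q : ℂ[X], ∀ s : ℝ, u s = q.eval (s : ℂ) := by
  obtain ⟨q, rfl⟩ := derivative_surjective p
  have hd : ∀ s : ℝ, HasDerivAt (fun s : ℝ => u s - q.eval (s : ℂ)) 0 s := fun s => by
    simpa using (hu s).fun_sub (q.hasDerivAt (s : ℂ)).comp_ofReal
  refine ⟨q + C (u 0 - q.eval 0), fun s => ?_⟩
  have hconst := is_const_of_deriv_eq_zero (fun s => (hd s).differentiableAt)
    (fun s => (hd s).deriv) s 0
  rw [eval_add, eval_C]
  exact sub_eq_iff_eq_add'.1 (by simpa using hconst)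

theorem exists_eq_eval_mul_exp {V : Submodule ℂ (ℝ → ℂ)} {D : Module.End ℂ V}
    (hD : ∀ (v : V) (s : ℝ), HasDerivAt (v : ℝ → ℂ) ((D v : ℝ → ℂ) s) s) (l : ℂ) {v : V}
    (hv : v ∈ D.maxGenEigenspace l) :
    ∃ q : ℂ[X], ∀ s : ℝ, (v : ℝ → ℂ) s = q.eval (s : ℂ) * Complex.exp (l * s) := by
  rw [Module.End.mem_maxGenEigenspace] at hv
  obtain ⟨N, hN⟩ := hv
  induction N generalizing v with
  | zero =>
    have hv : v = 0 := by simpa using hN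
    exact ⟨0, fun s => by simp [hv]⟩
  | succ N ih =>
    rw [pow_succ, Module.End.mul_apply] at hN
    obtain ⟨p, hp⟩ := ih hN
    have hexp : ∀ s : ℝ, HasDerivAt (fun s : ℝ => Complex.exp (-l * s))
        (Complex.exp (-l * s) * -l) s := fun s => by
      simpa using ((hasDerivAt_id (s : ℂ)).const_mul (-l)).cexp.comp_ofReal
    have hder : ∀ s : ℝ, HasDerivAt (fun s : ℝ => (v : ℝ → ℂ) s * Complex.exp (-l * s))
        (p.eval (s : ℂ)) s := fun s => by
      have hps : (D v : ℝ → ℂ) s - l * (v : ℝ → ℂ) s = p.eval (s : ℂ) * Complex.exp (l * s) := by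
        simpa using hp s
      have hinv : Complex.exp (l * s) * Complex.exp (-l * s) = 1 := by simp [← Complex.exp_add]
      have hval : p.eval (s : ℂ) = (D v : ℝ → ℂ) s * Complex.exp (-l * s) +
          (v : ℝ → ℂ) s * (Complex.exp (-l * s) * -l) := by
        linear_combination (-Complex.exp (-l * s)) * hps - p.eval (s : ℂ) * hinv
      rw [hval]
      exact (hD v s).mul (hexp s)
    obtain ⟨q, hq⟩ := exists_eq_eval_of_hasDerivAt_eval hder
    exact ⟨q, fun s => by rw [← hq, mul_assoc, ← Complex.exp_add]; simp⟩

theorem IsRepresentative.exists_end_hasDerivAt {f : ℝ → ℂ} (hf : IsRepresentative f) :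
    ∃ D : Module.End ℂ (translateSpan f), ∀ (v : translateSpan f) (s : ℝ),
      HasDerivAt (v : ℝ → ℂ) ((D v : ℝ → ℂ) s) s := by
  have hder : ∀ v : translateSpan f, ∃ v' : translateSpan f,
      ∀ s, HasDerivAt (v : ℝ → ℂ) ((v' : ℝ → ℂ) s) s := fun v => by
    obtain ⟨v', hv', hd⟩ := (hf.of_mem_translateSpan v.2).exists_hasDerivAt
    exact ⟨⟨v', translateSpan_le (fun h => translateSpan_mem_invtSubmodule h f v.2) hv'⟩, hd⟩
  choose D hD using hder
  refine ⟨⟨⟨D, fun v w => ?_⟩, fun c v => ?_⟩, hD⟩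
  · ext s
    exact (hD (v + w) s).unique ((hD v s).add (hD w s))
  · ext s
    exact (hD (c • v) s).unique ((hD v s).const_smul c)

theorem IsRepresentative.mem_span_eval_mul_exp {f : ℝ → ℂ} (hf : IsRepresentative f) :
    f ∈ Submodule.span ℂ (Set.range fun a : ℂ[X] × ℂ =>
      fun s : ℝ => a.1.eval (s : ℂ) * Complex.exp (a.2 * s)) := by
  have : FiniteDimensional ℂ (translateSpan f) := .of_fg hf.fg_translateSpan
  obtain ⟨D, hD⟩ := hf.exists_end_hasDerivAt
  have hsup : ⟨f, self_mem_translateSpan f⟩ ∈ ⨆ l, D.maxGenEigenspace l := by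
    rw [D.iSup_maxGenEigenspace_eq_top]
    exact Submodule.mem_top
  refine Submodule.iSup_induction _
    (motive := fun v : translateSpan f => (v : ℝ → ℂ) ∈ Submodule.span ℂ _) hsup
    (fun l v hv => ?_) (zero_mem _) fun _ _ => add_mem
  obtain ⟨q, hq⟩ := exists_eq_eval_mul_exp hD l hv
  exact Submodule.subset_span ⟨(q, l), funext fun s => (hq s).symm⟩

end RealLine

section ExpPoly

variable {d : ℕ}

theorem isExpPoly_of_fintype {ι : Type*} [Fintype ι] {f : (Fin d → ℝ) → ℂ}
    (p : ι → MvPolynomial (Fin d) ℂ) (lam : ι → Fin d → ℂ)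
    (hf : ∀ x, f x = ∑ j, MvPolynomial.eval (fun i => (x i : ℂ)) (p j) *
      Complex.exp (∑ i, lam j i * (x i : ℂ))) : IsExpPoly d f := by
  let e := Fintype.equivFin ι
  refine ⟨Fintype.card ι, p ∘ e.symm, lam ∘ e.symm, fun x => (hf x).trans ?_⟩
  exact (e.symm.sum_comp _).symm

theorem isExpPoly_const (c : ℂ) : IsExpPoly d fun _ => c :=
  ⟨1, fun _ => MvPolynomial.C c, fun _ => 0, fun x => by simp⟩

theorem IsExpPoly.add {f g : (Fin d → ℝ) → ℂ} (hf : IsExpPoly d f) (hg : IsExpPoly d g) :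
    IsExpPoly d (f + g) := by
  obtain ⟨n, p, l, hp⟩ := hf
  obtain ⟨n', p', l', hp'⟩ := hg
  exact isExpPoly_of_fintype (Sum.elim p p') (Sum.elim l l') fun x => by simp [hp, hp']

theorem IsExpPoly.mul {f g : (Fin d → ℝ) → ℂ} (hf : IsExpPoly d f) (hg : IsExpPoly d g) :
    IsExpPoly d (f * g) := by
  obtain ⟨n, p, l, hp⟩ := hf
  obtain ⟨n', p', l', hp'⟩ := hg
  refine isExpPoly_of_fintype (fun a : Fin n × Fin n' => p a.1 * p' a.2)
    (fun a => l a.1 + l' a.2) fun x => ?_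
  simp only [Pi.mul_apply, hp, hp', Finset.sum_mul_sum, Fintype.sum_prod_type, map_mul,
    Pi.add_apply, add_mul, Finset.sum_add_distrib, Complex.exp_add, mul_mul_mul_comm]

theorem IsExpPoly.sum {ι : Type*} {s : Finset ι} {F : ι → (Fin d → ℝ) → ℂ}
    (hF : ∀ i ∈ s, IsExpPoly d (F i)) : IsExpPoly d (∑ i ∈ s, F i) :=
  Finset.sum_induction F (IsExpPoly d) (fun _ _ => .add) (isExpPoly_const 0) hF

theorem IsRepresentative.isExpPoly_comp_apply {f : ℝ → ℂ} (hf : IsRepresentative f) (i : Fin d) :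
    IsExpPoly d fun x => f (x i) := by
  refine Submodule.span_induction (p := fun g _ => IsExpPoly d fun x => g (x i)) ?_
    (isExpPoly_const 0) (fun _ _ _ _ => .add) (fun c _ _ => (isExpPoly_const c).mul)
    hf.mem_span_eval_mul_exp
  rintro _ ⟨⟨q, l⟩, rfl⟩
  refine ⟨1, fun _ => q.toMvPolynomial i, fun _ => Pi.single i l, fun x => ?_⟩
  simp [MvPolynomial.eval_toMvPolynomial, Pi.single_apply]

theorem IsRepresentative.isExpPoly_comp_sum_single {f : (Fin d → ℝ) → ℂ} (hf : IsRepresentative f)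
    (s : Finset (Fin d)) : IsExpPoly d fun x => f (∑ i ∈ s, Pi.single i (x i)) := by
  induction s using Finset.induction_on generalizing f with
  | empty => exact isExpPoly_const (f 0)
  | insert a s ha ih =>
    obtain ⟨n, u, v, hu, hv, hadd⟩ := hf.exists_add_eq_sum
    have hline : ∀ j, IsExpPoly d fun x => u j (Pi.single a (x a)) := fun j =>
      ((hf.of_mem_translateSpan (hu j)).comp_addMonoidHom
        (AddMonoidHom.single (fun _ : Fin d => ℝ) a)
        (continuous_single (A := fun _ : Fin d => ℝ) a)).isExpPoly_comp_apply a
    have hrest : ∀ j, IsExpPoly d fun x => v j (∑ i ∈ s, Pi.single i (x i)) := fun j =>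
      ih (hf.of_mem_translateSpan (hv j))
    convert IsExpPoly.sum (s := Finset.univ) fun j _ => (hline j).mul (hrest j) using 1
    ext x
    simp [Finset.sum_insert ha, hadd]

theorem IsRepresentative.isExpPoly {f : (Fin d → ℝ) → ℂ} (hf : IsRepresentative f) :
    IsExpPoly d f := by
  simpa only [Finset.univ_sum_single] using hf.isExpPoly_comp_sum_single Finset.univ

theorem isRepresentative_eval_mvPolynomial {ι : Type*} (p : MvPolynomial ι ℂ) :
    IsRepresentative fun x : ι → ℝ => MvPolynomial.eval (fun i => (x i : ℂ)) p := by
  induction p using MvPolynomial.induction_on with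
  | C c => simpa only [MvPolynomial.eval_C] using isRepresentative_const c
  | add p q hp hq =>
    simp only [map_add]
    exact hp.add hq
  | mul_X p i hp =>
    have hcoord : IsRepresentative fun x : ι → ℝ => (x i : ℂ) :=
      isRepresentative_addMonoidHom
        ((Complex.ofRealHom : ℝ →+ ℂ).comp (Pi.evalAddMonoidHom (fun _ : ι => ℝ) i))
        (Complex.continuous_ofReal.comp (continuous_apply i))
    simp only [map_mul, MvPolynomial.eval_X]
    exact hp.mul hcoord

theorem isRepresentative_exp_sum_mul {ι : Type*} [Fintype ι] (l : ι → ℂ) :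
    IsRepresentative fun x : ι → ℝ => Complex.exp (∑ i, l i * (x i : ℂ)) :=
  isRepresentative_addChar
    { toFun := fun x : ι → ℝ => Complex.exp (∑ i, l i * (x i : ℂ))
      map_zero_eq_one' := by simp
      map_add_eq_mul' := fun x y => by
        simp [mul_add, Finset.sum_add_distrib, Complex.exp_add] }
    (show Continuous fun x : ι → ℝ => Complex.exp (∑ i, l i * (x i : ℂ)) by fun_prop)

theorem isExpPoly_iff_isRepresentative {f : (Fin d → ℝ) → ℂ} :
    IsExpPoly d f ↔ IsRepresentative f := by
  refine ⟨fun ⟨n, p, l, hf⟩ => ?_, IsRepresentative.isExpPoly⟩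
  convert IsRepresentative.sum (s := Finset.univ) fun j _ =>
    (isRepresentative_eval_mvPolynomial (p j)).mul (isRepresentative_exp_sum_mul (l j)) using 1
  ext x
  simp [hf]

end ExpPoly

theorem stmt4 (d t : ℕ) (hd : 0 < d) (ht : 0 < t) (h : Fin t → Fin d → ℝ)
    (hdense : Dense ((AddSubgroup.closure (Set.range h) :
      AddSubgroup (Fin d → ℝ)) : Set (Fin d → ℝ)))
    (f : (Fin d → ℝ) → ℂ) (hf : Continuous f)
    (m : Fin t → ℕ)
    (hexp : ∀ k, IsExpPoly d ((fd (h k))^[m k] f)) :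
    IsExpPoly d f :=
  isExpPoly_iff_isRepresentative.2 <|
    IsRepresentative.of_fd_iterate hdense hf fun k => isExpPoly_iff_isRepresentative.1 (hexp k)
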